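/- arXiv:2406.12332 — 3 statements merged into one kernel-verified Lean document; each statement's English description precedes it below -/
import Mathlib

section
/- Let n = 2N-1 be odd, q = exp(2πij/(3(2N-1))) with gcd(j, 6N-3) = 1, and ω = e^{πi/3} with ω^2 = q^{2N-1}. Then ω^2·Σ_{k=1}^{N-1} q^k/(1-q^{6k}) + Σ_{k=1}^{N-1} q^{2k}/(1-q^{6k}) - Σ_{k=1}^{N} 1/(1-q^{3k-2}) = -(N/3)(1+ω). -/
open Finset Complex Real

namespace OddCase

lemma weighted_geom (a : ℂ) (m : ℕ) :
    (1 - a) * ∑ s ∈ range m, (s : ℂ) * a ^ s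
      = ∑ s ∈ range m, a ^ s - 1 - ((m : ℂ) - 1) * a ^ m := by
  induction m with
  | zero => simp
  | succ m ih =>
    rw [sum_range_succ, sum_range_succ, mul_add, ih]
    push_cast
    ring

lemma geom_zero (a : ℂ) (n : ℕ) (h : a ^ n = 1) (h1 : a ≠ 1) : ∑ s ∈ range n, a ^ s = 0 := by
  rw [geom_sum_eq h1, h]; simp

lemma inv_eq (a : ℂ) (n : ℕ) (h : a ^ n = 1) (h1 : a ≠ 1) :
    (n : ℂ) * (1 / (1 - a)) = - ∑ s ∈ range n, (s : ℂ) * a ^ s := by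
  have h2 : 1 - a ≠ 0 := sub_ne_zero.mpr (Ne.symm h1)
  have := weighted_geom a n
  rw [geom_zero a n h h1, h] at this
  field_simp
  linear_combination this

lemma geom_Icc (x : ℂ) (M : ℕ) : (1 - x) * ∑ k ∈ Icc 1 M, x ^ k = x - x ^ (M + 1) := by
  induction M with
  | zero => simp
  | succ m ih =>
    rw [sum_Icc_succ_top (by omega), mul_add, ih]
    ring

lemma reindexA (M : ℕ) (G : ℕ → ℂ) (hG : ∀ t, G (t + (2 * M + 1)) = G t) :
    ∑ s ∈ range (2 * M + 1), (s : ℂ) * G (2 * s)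
      = ∑ t ∈ range (2 * M + 1), (if t % 2 = 0 then (t : ℂ) / 2 else (t + (2 * M + 1)) / 2) * G t := by
  refine sum_bij' (fun s _ => if s ≤ M then 2 * s else 2 * s - (2 * M + 1))
    (fun t _ => if t % 2 = 0 then t / 2 else (t + (2 * M + 1)) / 2) ?_ ?_ ?_ ?_ ?_
  · intro s hs; simp only [mem_range] at *; split_ifs <;> omega
  · intro s hs; simp only [mem_range] at *; split_ifs <;> omega
  · intro s hs; simp only [mem_range] at *; split_ifs <;> omega
  · intro s hs; simp only [mem_range] at *; split_ifs <;> omega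
  · intro s hs
    simp only [mem_range] at hs
    by_cases h : s ≤ M
    · have : (2 * s) % 2 = 0 := by omega
      simp only [h, if_true, this]
      push_cast; ring
    · obtain ⟨r, rfl⟩ : ∃ r, s = M + 1 + r := ⟨s - (M + 1), by omega⟩
      have e : 2 * (M + 1 + r) - (2 * M + 1) = 2 * r + 1 := by omega
      have e2 : 2 * (M + 1 + r) = 2 * r + 1 + (2 * M + 1) := by omega
      have : ¬ (2 * r + 1) % 2 = 0 := by omega
      simp only [h, if_false, e, this]
      rw [e2, hG]
      push_cast; ring

lemma reindexB (M : ℕ) (G : ℕ → ℂ) (hG : ∀ t, G (t + (2 * M + 1)) = G t) :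
    ∑ s ∈ range (2 * M + 1), (s : ℂ) * G (4 * M + 1 - 2 * s)
      = ∑ t ∈ range (2 * M + 1),
        (if t % 2 = 0 then (2 * M - t : ℂ) / 2 else (4 * M + 1 - t) / 2) * G t := by
  refine sum_bij' (fun s _ => if s ≤ M then 2 * M - 2 * s else 4 * M + 1 - 2 * s)
    (fun t _ => if t % 2 = 0 then (2 * M - t) / 2 else (4 * M + 1 - t) / 2) ?_ ?_ ?_ ?_ ?_
  · intro s hs; simp only [mem_range] at *; split_ifs <;> omega
  · intro s hs; simp only [mem_range] at *; split_ifs <;> omega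
  · intro s hs; simp only [mem_range] at *; split_ifs <;> omega
  · intro s hs; simp only [mem_range] at *; split_ifs <;> omega
  · intro s hs
    simp only [mem_range] at hs
    by_cases h : s ≤ M
    · obtain ⟨r, rfl⟩ : ∃ r, M = s + r := ⟨M - s, by omega⟩
      have e : 2 * (s + r) - 2 * s = 2 * r := by omega
      have e2 : 4 * (s + r) + 1 - 2 * s = 2 * r + (2 * (s + r) + 1) := by omega
      have : (2 * r) % 2 = 0 := by omega
      simp only [h, if_true, e, this]
      rw [e2, hG]
      push_cast; ring
    · obtain ⟨r, hr⟩ : ∃ r, 4 * M + 1 - 2 * s = 2 * r + 1 := ⟨2 * M - s, by omega⟩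
      have hr2 : s = 2 * M - r := by omega
      have hr3 : r ≤ 2 * M := by omega
      have : ¬ (2 * r + 1) % 2 = 0 := by omega
      simp only [h, if_false, hr, this]
      rw [hr2, Nat.cast_sub hr3]
      push_cast; ring

lemma reindexC (M : ℕ) (G : ℕ → ℂ) (hG : ∀ t, G (t + (2 * M + 1)) = G t) :
    ∑ s ∈ range (2 * M + 1), (s : ℂ) * G (3 * M + 1 - s)
      = ∑ t ∈ range (2 * M + 1),
        ((M : ℂ) - t + (if t ≤ M then 0 else (2 * M + 1 : ℂ))) * G t := by
  refine sum_bij' (fun s _ => if s ≤ M then M - s else 3 * M + 1 - s)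
    (fun t _ => if t ≤ M then M - t else 3 * M + 1 - t) ?_ ?_ ?_ ?_ ?_
  · intro s hs; simp only [mem_range] at *; split_ifs <;> omega
  · intro s hs; simp only [mem_range] at *; split_ifs <;> omega
  · intro s hs; simp only [mem_range] at *; split_ifs <;> omega
  · intro s hs; simp only [mem_range] at *; split_ifs <;> omega
  · intro s hs
    simp only [mem_range] at hs
    by_cases h : s ≤ M
    · have e2 : 3 * M + 1 - s = (M - s) + (2 * M + 1) := by omega
      have : M - s ≤ M := by omega
      simp only [h, if_true, this]
      rw [e2, hG, Nat.cast_sub h]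
      push_cast; ring
    · have e : ¬ 3 * M + 1 - s ≤ M := by omega
      simp only [h, if_false, e]
      rw [Nat.cast_sub (by omega)]
      push_cast; ring

end OddCase

open OddCase

theorem odd_case_lemma
    (N j : ℕ) (hN : 1 ≤ N) (hj : Nat.gcd j (6 * N - 3) = 1)
    (q : ℂ) (hq : q = Complex.exp (2 * Real.pi * Complex.I * j / (3 * (2 * N - 1))))
    (ω : ℂ) (hω : ω = Complex.exp (Real.pi * Complex.I / 3))
    (hω2 : ω ^ 2 = q ^ (2 * N - 1)) :
    ω ^ 2 * ∑ k ∈ Finset.Icc 1 (N - 1), q ^ k / (1 - q ^ (6 * k)) +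
      ∑ k ∈ Finset.Icc 1 (N - 1), q ^ (2 * k) / (1 - q ^ (6 * k)) -
      ∑ k ∈ Finset.Icc 1 N, 1 / (1 - q ^ (3 * k - 2)) =
      -((N : ℂ) / 3) * (1 + ω) := by
  obtain ⟨M, rfl⟩ : ∃ M, N = M + 1 := ⟨N - 1, by omega⟩
  have hp : IsPrimitiveRoot q (6 * M + 3) := by
    have h := Complex.isPrimitiveRoot_exp_of_coprime j (6 * M + 3) (by omega)
      (by have : 6 * (M + 1) - 3 = 6 * M + 3 := by omega
          rwa [this] at hj)
    convert h using 1
    rw [hq]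
    congr 1
    push_cast
    have h1 : (3 * (2 * ((M : ℂ) + 1) - 1)) = 6 * M + 3 := by ring
    rw [h1]; ring
  have hωq : ω ^ 2 - ω + 1 = 0 := by
    have h3 : ω ^ 3 = -1 := by
      rw [hω, ← Complex.exp_nat_mul]
      rw [← Complex.exp_pi_mul_I]; congr 1; push_cast; ring
    have hne : ω + 1 ≠ 0 := by
      intro h
      have hre : ω.re = 1 / 2 := by
        have : (Real.pi * Complex.I / 3 : ℂ) = ((Real.pi / 3 : ℝ) : ℂ) * Complex.I := by
          push_cast; ring
        rw [hω, this, Complex.exp_ofReal_mul_I_re, Real.cos_pi_div_three]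
      have := congrArg Complex.re h
      simp [hre] at this
      norm_num at this
    have : (ω + 1) * (ω ^ 2 - ω + 1) = 0 := by linear_combination h3
    exact (mul_eq_zero.mp this).resolve_left hne
  clear hj hq hω
  have e1 : 2 * (M + 1) - 1 = 2 * M + 1 := by omega
  rw [e1] at hω2
  have e2 : M + 1 - 1 = M := by omega
  rw [e2]
  set ζ := ω ^ 2 with hζ
  have hζ1 : (1 - ζ) * (1 + ω) = 3 := by
    rw [hζ]; linear_combination (-2 - ω) * hωq
  have hζ0 : 1 - ζ ≠ 0 := by
    intro h; rw [h] at hζ1; norm_num at hζ1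
  have hq1 : q ^ (6 * M + 3) = 1 := hp.pow_eq_one
  have hne : ∀ m : ℕ, ¬ (6 * M + 3) ∣ m → 1 - q ^ m ≠ 0 := by
    intro m hm h
    exact hm ((hp.pow_eq_one_iff_dvd m).mp (by linear_combination -h))
  have hne3 : ∀ m : ℕ, m % 3 ≠ 0 → 1 - q ^ m ≠ 0 := by
    intro m hm
    apply hne
    intro h
    have : 3 ∣ m := dvd_trans ⟨2 * M + 1, by ring⟩ h
    omega
  have hne6 : ∀ k ∈ Icc 1 M, q ^ (6 * k) ≠ 1 := by
    intro k hk h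
    rw [mem_Icc] at hk
    rw [hp.pow_eq_one_iff_dvd] at h
    obtain ⟨c, hc⟩ := h
    have hc0 : 1 ≤ c := by
      rcases Nat.eq_zero_or_pos c with h | h
      · subst h; omega
      · exact h
    have : (6 * M + 3) * 1 ≤ (6 * M + 3) * c := Nat.mul_le_mul_left _ hc0
    omega
  set G : ℕ → ℂ := fun t => 1 / (1 - q ^ (1 + 3 * t)) with hGdef
  have hG : ∀ t, G (t + (2 * M + 1)) = G t := by
    intro t
    simp only [hGdef]
    have : 1 + 3 * (t + (2 * M + 1)) = 1 + 3 * t + (6 * M + 3) := by ring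
    rw [this, pow_add, hq1, mul_one]
  -- reflection
  have refl : ∀ a b : ℕ, a + b = 2 * (6 * M + 3) → a % 3 ≠ 0 →
      1 / (1 - q ^ a) = 1 - 1 / (1 - q ^ b) := by
    intro a b hab ha
    have h1 := hne3 a ha
    have h2 := hne3 b (by omega)
    have h3 : q ^ a * q ^ b = 1 := by
      rw [← pow_add, hab, mul_comm, pow_mul, hq1, one_pow]
    field_simp
    linear_combination -h3
  have S1 : ((2 * M + 1 : ℕ) : ℂ) * (ζ * ∑ k ∈ Icc 1 M, q ^ k / (1 - q ^ (6 * k)))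
      = - ∑ s ∈ range (2 * M + 1), (s : ℂ) *
        ((ζ + 1) * G (2 * s) - ζ - (1 - G (3 * M + 1 - s))) := by
    have : ∀ k ∈ Icc 1 M, ((2 * M + 1 : ℕ) : ℂ) * (q ^ k / (1 - q ^ (6 * k)))
        = - ∑ s ∈ range (2 * M + 1), (s : ℂ) * (q ^ (1 + 6 * s)) ^ k := by
      intro k hk
      have h := inv_eq (q ^ (6 * k)) (2 * M + 1) (by
        rw [← pow_mul, show 6 * k * (2 * M + 1) = (6 * M + 3) * (2 * k) by ring, pow_mul, hq1,
          one_pow]) (hne6 k hk)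
      rw [div_eq_mul_one_div, mul_left_comm, h, mul_neg, mul_sum]
      congr 1
      refine sum_congr rfl fun s _ => ?_
      ring
    rw [mul_left_comm, mul_sum, sum_congr rfl this, sum_neg_distrib, sum_comm, mul_neg, mul_sum]
    congr 1
    refine sum_congr rfl fun s hs => ?_
    rw [mem_range] at hs
    rw [← mul_sum, mul_left_comm]
    congr 1
    have hx := hne3 (1 + 6 * s) (by omega)
    have g := geom_Icc (q ^ (1 + 6 * s)) M
    have hy := hne3 (3 * s + 3 * M + 2) (by omega)
    have r := refl (3 * s + 3 * M + 2) (1 + 3 * (3 * M + 1 - s)) (by omega) (by omega)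
    have hy2 : (q ^ (3 * s + 3 * M + 2)) ^ 2 = q ^ (1 + 6 * s) := by
      rw [← pow_mul, show (3 * s + 3 * M + 2) * 2 = 1 + 6 * s + (6 * M + 3) by ring, pow_add, hq1,
        mul_one]
    have hxN : ζ * (q ^ (1 + 6 * s)) ^ (M + 1) = q ^ (3 * s + 3 * M + 2) := by
      rw [hω2, ← pow_mul, ← pow_add, show 2 * M + 1 + (1 + 6 * s) * (M + 1)
        = 3 * s + 3 * M + 2 + (6 * M + 3) * s by ring, pow_add, pow_mul, hq1, one_pow, mul_one]
    have hGs : G (2 * s) = 1 / (1 - q ^ (1 + 6 * s)) := by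
      simp only [hGdef]; rw [show 1 + 3 * (2 * s) = 1 + 6 * s by ring]
    have hr : 1 - G (3 * M + 1 - s) = 1 / (1 - q ^ (3 * s + 3 * M + 2)) := by
      rw [r]
    rw [hGs, hr]
    set x := q ^ (1 + 6 * s)
    set y := q ^ (3 * s + 3 * M + 2)
    have hS : ζ * ∑ k ∈ Icc 1 M, x ^ k = (ζ * x - y) / (1 - x) := by
      rw [eq_div_iff hx]; linear_combination ζ * g - hxN
    rw [hS]
    clear_value x y
    subst hy2
    field_simp
    ring
  have S2 : ((2 * M + 1 : ℕ) : ℂ) * (∑ k ∈ Icc 1 M, q ^ (2 * k) / (1 - q ^ (6 * k)))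
      = - ∑ s ∈ range (2 * M + 1), (s : ℂ) *
        ((ζ + 1) * (1 - G (4 * M + 1 - 2 * s)) - 1 - ζ * G s) := by
    have : ∀ k ∈ Icc 1 M, ((2 * M + 1 : ℕ) : ℂ) * (q ^ (2 * k) / (1 - q ^ (6 * k)))
        = - ∑ s ∈ range (2 * M + 1), (s : ℂ) * (q ^ (2 + 6 * s)) ^ k := by
      intro k hk
      have h := inv_eq (q ^ (6 * k)) (2 * M + 1) (by
        rw [← pow_mul, show 6 * k * (2 * M + 1) = (6 * M + 3) * (2 * k) by ring, pow_mul, hq1,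
          one_pow]) (hne6 k hk)
      rw [div_eq_mul_one_div, mul_left_comm, h, mul_neg, mul_sum]
      congr 1
      refine sum_congr rfl fun s _ => ?_
      ring
    rw [mul_sum, sum_congr rfl this, sum_neg_distrib, sum_comm]
    congr 1
    refine sum_congr rfl fun s hs => ?_
    rw [mem_range] at hs
    rw [← mul_sum]
    congr 1
    have hx := hne3 (2 + 6 * s) (by omega)
    have g := geom_Icc (q ^ (2 + 6 * s)) M
    have hy := hne3 (1 + 3 * s) (by omega)
    have r := refl (2 + 6 * s) (1 + 3 * (4 * M + 1 - 2 * s)) (by omega) (by omega)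
    have hy2 : (q ^ (1 + 3 * s)) ^ 2 = q ^ (2 + 6 * s) := by
      rw [← pow_mul]; congr 1; ring
    have hxN : (q ^ (2 + 6 * s)) ^ (M + 1) = ζ * q ^ (1 + 3 * s) := by
      rw [hω2, ← pow_mul, ← pow_add, show (2 + 6 * s) * (M + 1)
        = 2 * M + 1 + (1 + 3 * s) + (6 * M + 3) * s by ring, pow_add _ _ ((6 * M + 3) * s),
        pow_mul, hq1, one_pow, mul_one]
    have hr : 1 - G (4 * M + 1 - 2 * s) = 1 / (1 - q ^ (2 + 6 * s)) := by
      rw [r]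
    have hGs : G s = 1 / (1 - q ^ (1 + 3 * s)) := rfl
    rw [hGs, hr]
    set x := q ^ (2 + 6 * s)
    set y := q ^ (1 + 3 * s)
    have hS : ∑ k ∈ Icc 1 M, x ^ k = (x - ζ * y) / (1 - x) := by
      rw [eq_div_iff hx]; linear_combination g - hxN
    rw [hS]
    clear_value x y
    subst hy2
    field_simp
    ring
  have SG : (1 - ζ) * ∑ t ∈ range (2 * M + 1), G t = ((2 * M + 1 : ℕ) : ℂ) := by
    have : ∀ t ∈ range (2 * M + 1), (1 - ζ) * G t
        = ∑ s ∈ range (2 * M + 1), q ^ s * (q ^ (3 * s)) ^ t := by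
      intro t _
      have hx := hne3 (1 + 3 * t) (by omega)
      have g := geom_sum_mul (q ^ (1 + 3 * t)) (2 * M + 1)
      have hz : (q ^ (1 + 3 * t)) ^ (2 * M + 1) = ζ := by
        rw [hω2, ← pow_mul, show (1 + 3 * t) * (2 * M + 1) = 2 * M + 1 + (6 * M + 3) * t by ring,
          pow_add, pow_mul, hq1, one_pow, mul_one]
      rw [hz] at g
      have : ∑ s ∈ range (2 * M + 1), q ^ s * (q ^ (3 * s)) ^ t
          = ∑ s ∈ range (2 * M + 1), (q ^ (1 + 3 * t)) ^ s :=
        sum_congr rfl fun s _ => by ring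
      rw [this]
      simp only [hGdef]
      rw [mul_one_div, div_eq_iff hx]
      linear_combination g
    rw [mul_sum, sum_congr rfl this, sum_comm]
    simp_rw [← mul_sum]
    rw [sum_range_succ']
    have hz : ∀ s ∈ range (2 * M), q ^ (s + 1) * ∑ i ∈ range (2 * M + 1), (q ^ (3 * (s + 1))) ^ i
        = 0 := by
      intro s hs
      rw [mem_range] at hs
      rw [geom_zero, mul_zero]
      · rw [← pow_mul, show 3 * (s + 1) * (2 * M + 1) = (6 * M + 3) * (s + 1) by ring, pow_mul, hq1,
          one_pow]
      · intro h
        exact hne (3 * (s + 1)) (fun hd => by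
          have := Nat.le_of_dvd (by omega) hd
          omega) (by rw [h]; ring)
    rw [sum_eq_zero hz]
    simp
  have S3 : ∑ k ∈ Icc 1 (M + 1), 1 / (1 - q ^ (3 * k - 2)) = ∑ t ∈ range (M + 1), G t := by
    symm
    refine sum_bij' (fun t _ => t + 1) (fun k _ => k - 1) ?_ ?_ ?_ ?_ ?_
    · intro s hs; simp only [mem_range, mem_Icc] at *; omega
    · intro s hs; simp only [mem_range, mem_Icc] at *; omega
    · intro s hs; simp only [mem_range, mem_Icc] at *; omega
    · intro s hs; simp only [mem_range, mem_Icc] at *; omega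
    · intro s hs
      simp only [hGdef]
      rw [show 3 * (s + 1) - 2 = 1 + 3 * s by omega]
  have S3' : ∑ t ∈ range (M + 1), G t
      = ∑ t ∈ range (2 * M + 1), (if t ≤ M then G t else 0) := by
    rw [← sum_filter]
    congr 1
    ext t; simp only [mem_range, mem_filter]; omega
  have Sid : ∑ s ∈ range (2 * M + 1), (s : ℂ) = (2 * M + 1) * M := by
    have := congrArg (Nat.cast : ℕ → ℂ) (Finset.sum_range_id_mul_two (2 * M + 1))
    rw [show 2 * M + 1 - 1 = 2 * M by omega] at this
    have h2 : (∑ s ∈ range (2 * M + 1), (s : ℂ)) * 2 = (2 * M + 1) * (2 * M) := by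
      push_cast at this
      exact this
    linear_combination h2 / 2
  have key : ∑ s ∈ range (2 * M + 1), (s : ℂ) *
        ((ζ + 1) * G (2 * s) - ζ - (1 - G (3 * M + 1 - s)))
      + ∑ s ∈ range (2 * M + 1), (s : ℂ) *
        ((ζ + 1) * (1 - G (4 * M + 1 - 2 * s)) - 1 - ζ * G s)
      = (2 * M + 1 - ζ * M) * ∑ t ∈ range (2 * M + 1), G t
        - (2 * M + 1) * ∑ t ∈ range (M + 1), G t - (2 * M + 1) * M := by
    have E : ∑ s ∈ range (2 * M + 1), (s : ℂ) *
        ((ζ + 1) * G (2 * s) - ζ - (1 - G (3 * M + 1 - s)))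
      + ∑ s ∈ range (2 * M + 1), (s : ℂ) *
        ((ζ + 1) * (1 - G (4 * M + 1 - 2 * s)) - 1 - ζ * G s)
      = (ζ + 1) * ∑ s ∈ range (2 * M + 1), (s : ℂ) * G (2 * s)
        - (ζ + 1) * ∑ s ∈ range (2 * M + 1), (s : ℂ) * G (4 * M + 1 - 2 * s)
        + ∑ s ∈ range (2 * M + 1), (s : ℂ) * G (3 * M + 1 - s)
        - ζ * ∑ s ∈ range (2 * M + 1), (s : ℂ) * G s - ∑ s ∈ range (2 * M + 1), (s : ℂ) := by
      simp only [mul_sum, ← sum_add_distrib, ← sum_sub_distrib]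
      exact sum_congr rfl fun s _ => by ring
    rw [E, reindexA M G hG, reindexB M G hG, reindexC M G hG, Sid, S3']
    congr 1
    simp only [mul_sum, ← sum_add_distrib, ← sum_sub_distrib]
    refine sum_congr rfl fun t _ => ?_
    split_ifs <;> ring
  rw [S3]
  have hn0 : (2 * M + 1 : ℂ) ≠ 0 := by exact_mod_cast Nat.succ_ne_zero (2 * M)
  apply mul_left_cancel₀ hn0
  apply mul_left_cancel₀ hζ0
  push_cast at S1 S2 SG ⊢
  linear_combination (1 - ζ) * S1 + (1 - ζ) * S2 - (1 - ζ) * key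
    - (2 * M + 1 - ζ * M) * SG + (2 * M + 1) * (M + 1) / 3 * hζ1
end

section
/- Let n be a positive integer divisible by 3 and let q be a primitive n-th root of unity. Then Σ_{k=1}^{n/3} (-1)^k q^{k(3k-1)/2}/(1-q^{3k-1}) + Σ_{k=1}^{n/3 - 1} (-1)^k q^{k(3k+5)/2}/(1-q^{3k}) = (1/6)·(2 + (n+1)·q^{2n/3}). -/
open Finset Complex

/-- coefficient of `z^k` in `∏_{l<i} (1 - x^l z)` -/
noncomputable def ac (x : ℂ) : ℕ → ℕ → ℂ
  | _, 0 => 1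
  | 0, _ + 1 => 0
  | i + 1, k + 1 => ac x i (k + 1) - x ^ i * ac x i k

lemma ac_zero (x : ℂ) (i : ℕ) : ac x i 0 = 1 := by cases i <;> simp [ac]
lemma ac_zero_succ (x : ℂ) (k : ℕ) : ac x 0 (k + 1) = 0 := by simp [ac]
lemma ac_two (x : ℂ) (i k : ℕ) :
    ac x (i + 1) (k + 1) = ac x i (k + 1) - x ^ i * ac x i k := by simp [ac]

lemma ac_one (x : ℂ) (i : ℕ) : ∀ k : ℕ,
    ac x (i + 1) (k + 1) = x ^ (k + 1) * ac x i (k + 1) - x ^ k * ac x i k := by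
  induction i with
  | zero =>
    intro k
    rw [ac_two, ac_zero_succ]
    cases k with
    | zero => simp
    | succ k => simp [ac_zero_succ]
  | succ i ih =>
    intro k
    rw [ac_two]
    cases k with
    | zero =>
      have h1 := ih 0
      have h2 := ac_two x i 0
      simp only [ac_zero] at *
      linear_combination h1 - x ^ (0 + 1) * h2
    | succ k =>
      have h1 := ih (k + 1)
      have h2 := ac_two x i (k + 1)
      have h3 := ih k
      have h4 := ac_two x i k
      linear_combination h1 - x ^ (k + 1 + 1) * h2 - x ^ (i + 1) * h3 + x ^ (k + 1) * h4

lemma ac_three (x : ℂ) (i k : ℕ) :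
    (1 - x ^ (k + 1)) * ac x (i + 1) (k + 1) = - x ^ k * (1 - x ^ (i + 1)) * ac x i k := by
  linear_combination ac_one x i k - x ^ (k + 1) * ac_two x i k

lemma ac_diff (i k : ℕ) : Differentiable ℂ (fun x => ac x i k) := by
  induction i generalizing k with
  | zero => cases k <;> simp [ac]
  | succ i ih =>
    cases k with
    | zero => simp [ac]
    | succ k =>
      simp only [ac_two]
      have h1 := ih k
      have h2 := ih (k + 1)
      fun_prop

noncomputable def Es (x : ℂ) (M : ℕ) : ℂ := ∑ p ∈ antidiagonal M, ac x p.1 p.2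
noncomputable def Hs (x : ℂ) (M : ℕ) : ℂ := ∑ p ∈ antidiagonal M, x ^ p.1 * ac x p.1 p.2
noncomputable def Ds (x : ℂ) (M : ℕ) : ℂ := ∑ p ∈ antidiagonal M, x ^ p.2 * ac x p.1 p.2
noncomputable def Vs (x : ℂ) (M : ℕ) : ℂ :=
  ∑ p ∈ antidiagonal M, x ^ p.2 * ac x p.1 p.2 / (1 - x ^ (p.1 + 1))
noncomputable def Ws (x : ℂ) (M : ℕ) : ℂ :=
  ∑ p ∈ antidiagonal M, x ^ p.2 * ac x p.1 p.2 / (1 - x ^ (p.2 + 1))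
noncomputable def Qs (x : ℂ) (M : ℕ) : ℂ :=
  ∑ p ∈ antidiagonal M, ac x p.1 p.2 / (1 - x ^ p.1)

lemma split1 (f : ℕ → ℕ → ℂ) (M : ℕ) : ∑ p ∈ antidiagonal (M + 1), f p.1 p.2 =
    f (M + 1) 0 + ∑ p ∈ antidiagonal M, f p.1 (p.2 + 1) := by
  rw [Finset.Nat.sum_antidiagonal_succ', add_comm]

lemma split2 (f : ℕ → ℕ → ℂ) (M : ℕ) (h : f 0 (M + 2) = 0) :
    ∑ p ∈ antidiagonal (M + 2), f p.1 p.2 =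
    f (M + 2) 0 + ∑ p ∈ antidiagonal M, f (p.1 + 1) (p.2 + 1) := by
  rw [Finset.Nat.sum_antidiagonal_succ, h, zero_add, split1 (fun i k => f (i + 1) k)]

lemma Es_succ (x : ℂ) (M : ℕ) : Es x (M + 2) = Es x (M + 1) - Hs x M := by
  unfold Es Hs
  rw [split2 (fun i k => ac x i k) M (ac_zero_succ _ _), split1 (fun i k => ac x i k)]
  simp only [ac_two, sum_sub_distrib, ac_zero]
  ring

lemma Hs_succ (x : ℂ) (M : ℕ) :
    Hs x (M + 2) = x ^ (M + 2) * Es x (M + 1) - x ^ (M + 1) * Es x M := by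
  unfold Es Hs
  rw [split2 (fun i k => x ^ i * ac x i k) M (by simp [ac_zero_succ]),
    split1 (fun i k => ac x i k)]
  simp only [ac_zero, mul_add, mul_sum, add_sub_assoc, ← sum_sub_distrib]
  congr 1
  apply sum_congr rfl
  intro p hp
  rw [HasAntidiagonal.mem_antidiagonal] at hp
  rw [ac_one, ← hp]
  ring

lemma Es_rec (x : ℂ) (M : ℕ) :
    Es x (M + 4) = Es x (M + 3) - x ^ (M + 2) * Es x (M + 1) + x ^ (M + 1) * Es x M := by
  have h1 := Es_succ x (M + 2)
  have h2 := Hs_succ x M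
  linear_combination h1 - h2

lemma Ds_succ (x : ℂ) (M : ℕ) : Ds x (M + 1) = Es x (M + 2) + Ds x M := by
  unfold Es Ds
  rw [split2 (fun i k => ac x i k) M (ac_zero_succ _ _), split1 (fun i k => x ^ k * ac x i k)]
  simp only [ac_one, sum_sub_distrib, ac_zero]
  ring

lemma Vs_succ (x : ℂ) (M : ℕ) : Vs x (M + 1) = Qs x (M + 2) + Vs x M := by
  unfold Qs Vs
  rw [split2 (fun i k => ac x i k / (1 - x ^ i)) M (by simp),
    split1 (fun i k => x ^ k * ac x i k / (1 - x ^ (i + 1)))]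
  simp only [ac_one, sub_div, sum_sub_distrib, ac_zero]
  ring

lemma Qs_eq (x : ℂ) (M : ℕ) (hx : ∀ i, 1 ≤ i → i ≤ M + 2 → 1 - x ^ i ≠ 0) :
    (1 - x ^ (M + 2)) * Qs x (M + 2) = Es x (M + 2) - x ^ (M + 1) * Es x M := by
  unfold Qs Es
  rw [split2 (fun i k => ac x i k / (1 - x ^ i)) M (by simp),
    split2 (fun i k => ac x i k) M (ac_zero_succ _ _)]
  simp only [ac_zero, mul_add, mul_sum, add_sub_assoc, ← sum_sub_distrib]
  have h0 := hx (M + 2) (by omega) le_rfl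
  congr 1
  · field_simp
  apply sum_congr rfl
  intro p hp
  rw [HasAntidiagonal.mem_antidiagonal] at hp
  have h1 := hx (p.1 + 1) (by omega) (by omega)
  rw [← hp, mul_div_assoc', div_eq_iff h1]
  linear_combination x ^ (p.1 + 1) * ac_three x p.1 p.2

lemma Ws_eq (x : ℂ) (M : ℕ) (hx : ∀ i, 1 ≤ i → i ≤ M + 1 → 1 - x ^ i ≠ 0) :
    -(1 - x ^ (M + 2)) * Ws x M = Es x (M + 2) - x ^ (M + 1) * Es x M - 1 := by
  unfold Ws Es
  rw [split2 (fun i k => ac x i k) M (ac_zero_succ _ _)]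
  simp only [ac_zero, mul_sum, add_sub_assoc]
  rw [add_sub_left_comm, add_comm, sub_add, sub_self, sub_zero, ← sum_sub_distrib]
  apply sum_congr rfl
  intro p hp
  rw [HasAntidiagonal.mem_antidiagonal] at hp
  have h1 := hx (p.2 + 1) (by omega) (by omega)
  rw [← hp, mul_div_assoc', div_eq_iff h1]
  linear_combination - ac_three x p.1 p.2

/-- pentagonal exponent -/
def pe : ℕ → ℕ
  | 0 => 0
  | k + 1 => pe k + 3 * k + 1

noncomputable def cs (x : ℂ) (k : ℕ) : ℂ := (-1) ^ k * x ^ pe k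

lemma cs_succ (x : ℂ) (k : ℕ) : cs x (k + 1) = - x ^ (3 * k + 1) * cs x k := by
  unfold cs; rw [pe]; ring

lemma two_pe (k : ℕ) : 2 * pe k + k = 3 * k * k := by
  induction k with
  | zero => rfl
  | succ k ih => rw [pe]; nlinarith

lemma Es_closed (x : ℂ) (k : ℕ) :
    Es x (3 * k) = cs x k ∧ Es x (3 * k + 1) = cs x k * x ^ k ∧ Es x (3 * k + 2) = 0 ∧
    Es x (3 * k + 3) = cs x (k + 1) := by
  induction k with
  | zero =>
    have e0 : Es x 0 = 1 := by simp [Es, ac]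
    have e1 : Es x 1 = 1 := by simp [Es, ac, Finset.Nat.antidiagonal_succ]
    have e2 : Es x 2 = 0 := by simp [Es, ac, Finset.Nat.antidiagonal_succ]
    have e3 : Es x 3 = -x := by
      simp [Es, ac, Finset.Nat.antidiagonal_succ]
      ring
    simp [e0, e1, e2, e3, cs, pe]
  | succ k ih =>
    obtain ⟨h0, h1, h2, h3⟩ := ih
    have r1 := Es_rec x (3 * k)
    have r2 := Es_rec x (3 * k + 1)
    have r3 := Es_rec x (3 * k + 2)
    have c1 := cs_succ x k
    have c2 := cs_succ x (k + 1)
    have e4 : Es x (3 * k + 4) = cs x (k + 1) * x ^ (k + 1) := by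
      rw [r1, h3, h1, h0, c1]; ring
    have e5 : Es x (3 * k + 5) = 0 := by
      rw [show 3 * k + 5 = 3 * k + 1 + 4 by ring, r2, show 3 * k + 1 + 3 = 3 * k + 4 by ring, e4,
        show 3 * k + 1 + 1 = 3 * k + 2 by ring, h2, h1, c1]; ring
    refine ⟨?_, ?_, ?_, ?_⟩
    · exact h3
    · exact e4
    · exact e5
    · rw [show 3 * (k + 1) + 3 = 3 * k + 2 + 4 by ring, r3, show 3 * k + 2 + 3 = 3 * k + 5 by ring,
        e5, show 3 * k + 2 + 1 = 3 * k + 3 by ring, h3, h2, c2]; ring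

lemma sum_three (f : ℕ → ℂ) (M : ℕ) : ∑ j ∈ range (3 * M + 2), f (j + 1) =
    ∑ k ∈ range (M + 1), f (3 * k + 2) + ∑ k ∈ range M, f (3 * k + 3) +
      ∑ k ∈ range (M + 1), f (3 * k + 1) := by
  induction M with
  | zero => simp [sum_range_succ]; ring
  | succ M ih =>
    rw [show 3 * (M + 1) + 2 = 3 * M + 2 + 1 + 1 + 1 by ring, sum_range_succ, sum_range_succ,
      sum_range_succ, ih, sum_range_succ _ (M + 1), sum_range_succ _ M,
      sum_range_succ _ (M + 1), sum_range_succ _ M, sum_range_succ _ M]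
    ring_nf

lemma Ds_sum (x : ℂ) (N : ℕ) : Ds x N = ∑ j ∈ range (N + 1), Es x (j + 1) := by
  induction N with
  | zero => simp [Ds, Es, ac, Finset.Nat.antidiagonal_succ]
  | succ N ih => rw [sum_range_succ, ← ih, Ds_succ]; ring

lemma Vs_sum (x : ℂ) (N : ℕ) : Vs x N = ∑ j ∈ range (N + 1), Qs x (j + 1) := by
  induction N with
  | zero => simp [Vs, Qs, ac, Finset.Nat.antidiagonal_succ]
  | succ N ih => rw [sum_range_succ, ← ih, Vs_succ]; ring

lemma Ws_diff (q : ℂ) (N : ℕ) (hx : ∀ i, 1 ≤ i → i ≤ N + 1 → 1 - q ^ i ≠ 0) :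
    DifferentiableAt ℂ (fun x => Ws x N) q := by
  unfold Ws
  apply DifferentiableAt.fun_sum
  intro p hp
  rw [HasAntidiagonal.mem_antidiagonal] at hp
  have h := ac_diff p.1 p.2 q
  have h1 := hx (p.2 + 1) (by omega) (by omega)
  fun_prop (disch := assumption)

lemma L_closed (x : ℂ) (M : ℕ) : Es x (3 * M + 1 + 2) - x ^ (3 * M + 1 + 1) * Es x (3 * M + 1) =
    cs x (M + 1) * (1 + x ^ (M + 1)) := by
  obtain ⟨h0, h1, h2, h3⟩ := Es_closed x M
  rw [h1, show 3 * M + 1 + 2 = 3 * M + 3 by ring, h3, cs_succ]; ring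

section root
variable (M : ℕ) (q : ℂ)

lemma omega_rel (hq : IsPrimitiveRoot q (3 * (M + 1))) :
    1 + q ^ (M + 1) + (q ^ (M + 1)) ^ 2 = 0 := by
  have h1 : (q ^ (M + 1)) ^ 3 = 1 := by
    rw [← pow_mul, mul_comm]; exact hq.pow_eq_one
  have h2 : q ^ (M + 1) ≠ 1 := hq.pow_ne_one_of_pos_of_lt (by omega) (by omega)
  apply mul_left_cancel₀ (sub_ne_zero.2 h2)
  linear_combination h1

lemma den_ne (hq : IsPrimitiveRoot q (3 * (M + 1))) (i : ℕ) (h1 : 1 ≤ i) (h2 : i < 3 * (M + 1)) :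
    1 - q ^ i ≠ 0 :=
  sub_ne_zero.2 (hq.pow_ne_one_of_pos_of_lt (by omega) h2).symm

lemma cs_top (hq : IsPrimitiveRoot q (3 * (M + 1))) : cs q (M + 1) = - q ^ (M + 1) := by
  have h := Ws_eq q (3 * M + 1) (fun i h1 h2 => den_ne M q hq i h1 (by omega))
  rw [L_closed, show 3 * M + 1 + 2 = 3 * (M + 1) by ring, hq.pow_eq_one] at h
  have hw := omega_rel M q hq
  linear_combination q ^ (M + 1) * h + cs q (M + 1) * hw

lemma Ws_val (hq : IsPrimitiveRoot q (3 * (M + 1))) :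
    Ws q (3 * M + 1) = (3 * M + 2) / 6 - (q ^ (M + 1)) ^ 2 / 3 := by
  have hne : ∀ i, 1 ≤ i → i ≤ 3 * M + 1 + 1 → 1 - q ^ i ≠ 0 :=
    fun i h1 h2 => den_ne M q hq i h1 (by omega)
  have hq0 : q ≠ 0 := hq.ne_zero (by omega)
  have hW := (Ws_diff q (3 * M + 1) hne).hasDerivAt
  have hA : HasDerivAt (fun x : ℂ => -(1 - x ^ (3 * M + 1 + 2))) (((3 * M + 1 + 2 : ℕ) : ℂ) * q ^ (3 * M + 1 + 1)) q := by
    have := ((hasDerivAt_pow (3 * M + 1 + 2) q).const_sub 1).neg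
    rw [neg_neg] at this
    exact this
  have hL := hA.mul hW
  have hp1 := (hasDerivAt_pow (pe (M + 1)) q).const_mul ((-1 : ℂ) ^ (M + 1))
  have hp2 := (hasDerivAt_pow (M + 1) q).const_add 1
  have hR := (hp1.mul hp2).sub_const 1
  have hev : ∀ᶠ x in nhds q, ∀ i ∈ Finset.Icc 1 (3 * M + 1 + 1), 1 - x ^ i ≠ 0 := by
    rw [Filter.eventually_all_finset]
    intro i hi
    rw [Finset.mem_Icc] at hi
    have hc : ContinuousAt (fun x : ℂ => 1 - x ^ i) q := by fun_prop
    exact hc.eventually_ne (hne i hi.1 hi.2)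
  have hL' := hL.congr_of_eventuallyEq (f₁ := fun x => (-1 : ℂ) ^ (M + 1) * x ^ pe (M + 1) * (1 + x ^ (M + 1)) - 1) (by
    filter_upwards [hev] with x hx
    have := Ws_eq x (3 * M + 1) (fun i h1 h2 => hx i (Finset.mem_Icc.2 ⟨h1, h2⟩))
    rw [L_closed] at this
    exact this.symm)
  have key := hL'.unique hR
  have h3 : q ^ (3 * M + 1 + 2) = 1 := by
    rw [show 3 * M + 1 + 2 = 3 * (M + 1) by ring]; exact hq.pow_eq_one
  rw [h3] at key
  have hpe : pe (M + 1) = (pe M + 3 * M) + 1 := rfl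
  have hc := cs_top M q hq
  unfold cs at hc
  have hw := omega_rel M q hq
  have h2 : (2 : ℂ) * pe (M + 1) + (M + 1) = 3 * (M + 1) * (M + 1) := by
    exact_mod_cast two_pe (M + 1)
  have hM : (M : ℂ) + 1 ≠ 0 := by exact_mod_cast Nat.succ_ne_zero M
  have e1 : (q ^ (3 * M + 1 + 1)) * q = 1 := by rw [← h3]; ring
  have e2 : q ^ (pe (M + 1) - 1) * q = q ^ pe (M + 1) := by
    rw [← pow_succ]; congr 1
  have e3 : q ^ (M + 1 - 1) * q = q ^ (M + 1) := by rw [← pow_succ]; congr 1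
  have key2 : 3 * ((M : ℂ) + 1) * Ws q (3 * M + 1) =
      - q ^ (M + 1) * pe (M + 1) * (1 + q ^ (M + 1)) - q ^ (M + 1) * (M + 1) * q ^ (M + 1) := by
    have key' : (3 * ((M : ℂ) + 1)) * q ^ (3 * M + 1 + 1) * Ws q (3 * M + 1) =
        (-1 : ℂ) ^ (M + 1) * (pe (M + 1) * q ^ (pe (M + 1) - 1)) * (1 + q ^ (M + 1)) +
        (-1 : ℂ) ^ (M + 1) * q ^ pe (M + 1) * ((M + 1) * q ^ (M + 1 - 1)) := by
      have hcast : ((3 * M + 1 + 2 : ℕ) : ℂ) = 3 * ((M : ℂ) + 1) := by push_cast; ring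
      have hcast2 : ((M + 1 : ℕ) : ℂ) = (M : ℂ) + 1 := by push_cast; ring
      rw [hcast, hcast2] at key
      linear_combination key
    clear key hL' hR hp2 hp1 hL hA hW
    generalize q ^ (3 * M + 1 + 1) = a1 at *
    generalize q ^ (pe (M + 1) - 1) = a2 at *
    generalize q ^ (M + 1 - 1) = a3 at *
    generalize q ^ (pe (M + 1)) = a4 at *
    generalize q ^ (M + 1) = w at *
    generalize (-1 : ℂ) ^ (M + 1) = s at *
    linear_combination q * key' - 3 * (M + 1) * Ws q (3 * M + 1) * e1 +
      s * pe (M + 1) * (1 + w) * e2 + (pe (M + 1) * (1 + w) + (M + 1) * w) * hc +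
      s * a4 * (M + 1) * e3
  apply mul_left_cancel₀ (mul_ne_zero three_ne_zero hM)
  rw [key2]
  linear_combination (-(pe (M + 1) : ℂ)) * hw + h2 / 2

lemma Vs_Ws (hq : IsPrimitiveRoot q (3 * (M + 1))) :
    Vs q (3 * M + 1) = Ds q (3 * M + 1) - Ws q (3 * M + 1) := by
  unfold Vs Ds Ws
  rw [← sum_sub_distrib]
  apply sum_congr rfl
  intro p hp
  rw [HasAntidiagonal.mem_antidiagonal] at hp
  have h1 := den_ne M q hq (p.1 + 1) (by omega) (by omega)
  have h2 := den_ne M q hq (p.2 + 1) (by omega) (by omega)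
  have h3 : q ^ (p.1 + 1) * q ^ (p.2 + 1) = 1 := by
    rw [← pow_add, ← hq.pow_eq_one]; congr 1; omega
  field_simp
  linear_combination (-(q ^ p.2 * ac q p.1 p.2)) * h3

lemma cs_refl (hq : IsPrimitiveRoot q (3 * (M + 1))) (k : ℕ) : ∀ j, j + k = M + 1 →
    cs q j = - q ^ (M + 1) * q ^ k * cs q k := by
  induction k with
  | zero =>
    intro j hj
    obtain rfl : j = M + 1 := by omega
    rw [cs_top M q hq]; simp [cs, pe]
  | succ k ih =>
    intro j hj
    have h := ih (j + 1) (by omega)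
    rw [cs_succ] at h
    rw [cs_succ]
    have h3 : q ^ (3 * j + 1) * q ^ (3 * k + 2) = 1 := by
      rw [← pow_add, ← hq.pow_eq_one]; congr 1; omega
    linear_combination (- q ^ (3 * k + 2)) * h - cs q j * h3

lemma refl1 (w t c a b : ℂ) (ha : 1 - a ≠ 0) (hb : 1 - b ≠ 0) (h : b * a = 1) :
    -w * t * c / (1 - b) = w * (c * t / (1 - a) - c * t) := by
  rw [div_sub' ha, mul_div_assoc', div_eq_div_iff hb ha]
  linear_combination (w * t * c) * h

lemma refl2 (w t c a b : ℂ) (ha : 1 - a ≠ 0) (hb : 1 - b ≠ 0) (h : b * a = 1) :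
    -w * t * c * b / (1 - b) = w * (c * t / (1 - a)) := by
  rw [mul_div_assoc', div_eq_div_iff hb ha]
  linear_combination (w * t * c) * h

lemma final (hq : IsPrimitiveRoot q (3 * (M + 1))) :
    ∑ k ∈ range (M + 1), cs q (k + 1) / (1 - q ^ (3 * k + 2)) +
      ∑ k ∈ range M, cs q (k + 1) * q ^ (3 * k + 3) / (1 - q ^ (3 * k + 3)) =
      (1 / 6 : ℂ) * (2 + (3 * (M + 1) + 1) * (q ^ (M + 1)) ^ 2) := by
  have hw := omega_rel M q hq
  have hV := Vs_Ws M q hq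
  rw [Ws_val M q hq, Vs_sum, Ds_sum, sum_three, sum_three] at hV
  have hne := den_ne M q hq
  set w := q ^ (M + 1) with hwdef
  have hw3 : w ^ 3 = 1 := by linear_combination (w - 1) * hw
  -- reflections
  have r1 : ∑ k ∈ range (M + 1), cs q (k + 1) / (1 - q ^ (3 * k + 2)) =
      ∑ k ∈ range (M + 1), w * (cs q k * q ^ k / (1 - q ^ (3 * k + 1)) - cs q k * q ^ k) := by
    rw [← sum_range_reflect]
    apply sum_congr rfl
    intro k hk
    rw [mem_range] at hk
    rw [cs_refl M q hq k _ (by omega), ← hwdef]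
    have h1 := hne (3 * k + 1) (by omega) (by omega)
    have h2 := hne (3 * (M + 1 - 1 - k) + 2) (by omega) (by omega)
    have h3 : q ^ (3 * (M + 1 - 1 - k) + 2) * q ^ (3 * k + 1) = 1 := by
      rw [← pow_add, ← hq.pow_eq_one]; congr 1; omega
    exact refl1 _ _ _ _ _ h1 h2 h3
  have r2 : ∑ k ∈ range M, cs q (k + 1) * q ^ (3 * k + 3) / (1 - q ^ (3 * k + 3)) =
      ∑ k ∈ range M, w * (cs q (k + 1) * q ^ (k + 1) / (1 - q ^ (3 * k + 3))) := by
    rw [← sum_range_reflect]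
    apply sum_congr rfl
    intro k hk
    rw [mem_range] at hk
    rw [cs_refl M q hq (k + 1) _ (by omega), ← hwdef]
    have h1 := hne (3 * k + 3) (by omega) (by omega)
    have h2 := hne (3 * (M - 1 - k) + 3) (by omega) (by omega)
    have h3 : q ^ (3 * (M - 1 - k) + 3) * q ^ (3 * k + 3) = 1 := by
      rw [← pow_add, ← hq.pow_eq_one]; congr 1; omega
    exact refl2 _ _ _ _ _ h1 h2 h3
  have r3 : ∑ k ∈ range M, cs q (k + 1) * q ^ (3 * k + 3) / (1 - q ^ (3 * k + 3)) =
      ∑ k ∈ range M, cs q (k + 1) / (1 - q ^ (3 * k + 3)) - ∑ k ∈ range M, cs q (k + 1) := by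
    rw [← sum_sub_distrib]
    apply sum_congr rfl
    intro k hk
    rw [mem_range] at hk
    have h1 := hne (3 * k + 3) (by omega) (by omega)
    field_simp
    ring
  -- closed forms
  have q2 : ∀ k ∈ range (M + 1), Qs q (3 * k + 2) = cs q (k + 1) / (1 - q ^ (3 * k + 2)) := by
    intro k hk
    rw [mem_range] at hk
    rw [eq_div_iff (hne (3 * k + 2) (by omega) (by omega)), mul_comm,
      Qs_eq q (3 * k) (fun i h1 h2 => hne i h1 (by omega))]
    obtain ⟨h0, h1, h2, h3⟩ := Es_closed q k
    rw [h0, h2, cs_succ]; ring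
  have q3 : ∀ k ∈ range M, Qs q (3 * k + 3) = cs q (k + 1) / (1 - q ^ (3 * k + 3)) +
      cs q (k + 1) * q ^ (k + 1) / (1 - q ^ (3 * k + 3)) := by
    intro k hk
    rw [mem_range] at hk
    rw [← add_div, eq_div_iff (hne (3 * k + 3) (by omega) (by omega)), mul_comm]
    have := Qs_eq q (3 * k + 1) (fun i h1 h2 => hne i h1 (by omega))
    rw [L_closed] at this
    linear_combination this
  have q1 : ∀ k ∈ range (M + 1), Qs q (3 * k + 1) = cs q k * q ^ k / (1 - q ^ (3 * k + 1)) := by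
    intro k hk
    rw [mem_range] at hk
    cases k with
    | zero => simp [Qs, ac, Finset.Nat.antidiagonal_succ, cs, pe]
    | succ k =>
      rw [eq_div_iff (hne _ (by omega) (by omega)), mul_comm]
      have := Qs_eq q (3 * k + 2) (fun i h1 h2 => hne i h1 (by omega))
      obtain ⟨h0, h1, h2, h3⟩ := Es_closed q k
      obtain ⟨h0', h1', h2', h3'⟩ := Es_closed q (k + 1)
      rw [h2] at this
      rw [← h1']
      linear_combination this
  have e2 : ∀ k ∈ range (M + 1), Es q (3 * k + 2) = 0 := fun k _ => (Es_closed q k).2.2.1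
  have e3 : ∀ k ∈ range M, Es q (3 * k + 3) = cs q (k + 1) := fun k _ => (Es_closed q k).2.2.2
  have e1 : ∀ k ∈ range (M + 1), Es q (3 * k + 1) = cs q k * q ^ k :=
    fun k _ => (Es_closed q k).2.1
  rw [sum_congr rfl q2, sum_congr rfl q3, sum_congr rfl q1, sum_congr rfl e2, sum_congr rfl e3,
    sum_congr rfl e1, sum_add_distrib, sum_const_zero] at hV
  rw [← mul_sum, sum_sub_distrib] at r1
  rw [← mul_sum] at r2
  generalize ∑ k ∈ range (M + 1), cs q (k + 1) / (1 - q ^ (3 * k + 2)) = S1 at *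
  generalize ∑ k ∈ range M, cs q (k + 1) * q ^ (3 * k + 3) / (1 - q ^ (3 * k + 3)) = S2 at *
  generalize ∑ k ∈ range (M + 1), cs q k * q ^ k / (1 - q ^ (3 * k + 1)) = A at *
  generalize ∑ k ∈ range (M + 1), cs q k * q ^ k = B at *
  generalize ∑ k ∈ range M, cs q (k + 1) * q ^ (k + 1) / (1 - q ^ (3 * k + 3)) = C at *
  generalize ∑ k ∈ range M, cs q (k + 1) / (1 - q ^ (3 * k + 3)) = F at *
  generalize ∑ k ∈ range M, cs q (k + 1) = G at *
  have hA : A = w ^ 2 * S1 + B := by rw [r1]; linear_combination (B - A) * hw3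
  have hC : C = w ^ 2 * S2 := by rw [r2]; linear_combination (- C) * hw3
  have hF : F = S2 + G := by rw [r3]; ring
  rw [hA, hC, hF] at hV
  have : -w * (S1 + S2) = -((3 * M + 2) / 6 - w ^ 2 / 3) := by
    linear_combination hV - (S1 + S2) * hw
  linear_combination (-w ^ 2) * this + (- (S1 + S2) - w / 3) * hw3 - hw / 3
end root

theorem main_identity
    (n : ℕ) (hn : 0 < n) (h3 : 3 ∣ n) (q : ℂ) (hq : IsPrimitiveRoot q n) :
    ∑ k ∈ Finset.Icc 1 (n / 3), (-1 : ℂ) ^ k * q ^ (k * (3 * k - 1) / 2) / (1 - q ^ (3 * k - 1)) +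
      ∑ k ∈ Finset.Icc 1 (n / 3 - 1), (-1 : ℂ) ^ k * q ^ (k * (3 * k + 5) / 2) / (1 - q ^ (3 * k)) =
      (1 / 6 : ℂ) * (2 + (n + 1) * q ^ (2 * n / 3)) := by
  obtain ⟨m, rfl⟩ := h3
  obtain ⟨M, rfl⟩ : ∃ M, m = M + 1 := ⟨m - 1, by omega⟩
  have h := final M q hq
  have i1 : 3 * (M + 1) / 3 = M + 1 := by omega
  have i2 : 2 * (3 * (M + 1)) / 3 = (M + 1) * 2 := by omega
  rw [i1, i2, Nat.add_sub_cancel, pow_mul]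
  have icc : ∀ (f : ℕ → ℂ) (N : ℕ), ∑ k ∈ Finset.Icc 1 N, f k = ∑ k ∈ range N, f (k + 1) := by
    intro f N
    rw [Finset.range_eq_Ico, Finset.sum_Ico_add' f 0 N 1]
    rfl
  rw [icc, icc]
  push_cast
  rw [← h]
  congr 1
  · apply sum_congr rfl
    intro k _
    have h1 : (k + 1) * (3 * (k + 1) - 1) / 2 = pe (k + 1) := by
      have := two_pe (k + 1)
      have h2 : 3 * (k + 1) - 1 = 3 * k + 2 := by omega
      rw [h2]
      apply Nat.div_eq_of_eq_mul_right two_pos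
      nlinarith
    rw [h1, show 3 * (k + 1) - 1 = 3 * k + 2 by omega]
    rfl
  · apply sum_congr rfl
    intro k _
    have h1 : (k + 1) * (3 * (k + 1) + 5) / 2 = pe (k + 1) + (3 * k + 3) := by
      have := two_pe (k + 1)
      apply Nat.div_eq_of_eq_mul_right two_pos
      nlinarith
    rw [h1, show 3 * (k + 1) = 3 * k + 3 by omega, pow_add q, ← mul_assoc]
    rfl
end

section
/- Let N > 1 with 2N-1 not divisible by 3, let χ be a non-principal Dirichlet character modulo 2N-1, and let ε = e^{2πi/3}. Then (Σ_{j=0}^{2N-2} j·χ(6j+1))·(Σ_{k=1}^{2N-2} ε^{(2N-1)k}·χ(k)) = -(Σ_{j=0}^{2N-2} j·χ(6j+2))·(Σ_{k=1-N}^{N-1} ε^{2(2N-1)k+2}·χ(k)). -/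
open Finset Complex Real

namespace CharSum

lemma sum_range_mul_aux (g : ℕ → ℂ) (c m : ℕ) :
    ∑ n ∈ range (c * m), g n = ∑ j ∈ range m, ∑ i ∈ range c, g (c * j + i) := by
  induction m with
  | zero => simp
  | succ m ih => rw [Nat.mul_succ, Finset.sum_range_add, ih, Finset.sum_range_succ]

/-- the partial character sums -/
noncomputable def D (M : ℕ) (χ : DirichletCharacter ℂ M) (r : ℕ) : ℂ :=
  ∑ k ∈ range M, if M * k % 6 = r then χ (k : ZMod M) else 0

lemma sum_D (M : ℕ) (χ : DirichletCharacter ℂ M) (F : ℕ → ℂ) :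
    ∑ k ∈ range M, F (M * k % 6) * χ (k : ZMod M) = ∑ r ∈ range 6, F r * D M χ r := by
  unfold D
  simp_rw [Finset.mul_sum]
  rw [Finset.sum_comm]
  refine Finset.sum_congr rfl fun k _ => ?_
  have h6 : M * k % 6 < 6 := Nat.mod_lt _ (by norm_num)
  simp [mul_ite, h6]

lemma sum_chi (M : ℕ) (hM : 1 < M) (χ : DirichletCharacter ℂ M) (hχ : χ ≠ 1) :
    ∑ k ∈ range M, χ (k : ZMod M) = 0 := by
  have : NeZero M := ⟨by omega⟩
  rw [← MulChar.sum_eq_zero_of_ne_one hχ]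
  refine Finset.sum_bij' (fun k _ => (k : ZMod M)) (fun a _ => a.val) ?_ ?_ ?_ ?_ ?_
  · simp
  · intro a _; simpa using ZMod.val_lt a
  · intro k hk; simpa using ZMod.val_cast_of_lt (by simpa using hk)
  · intro a _; simp
  · simp

lemma key (M : ℕ) (hM : 1 < M) (χ : DirichletCharacter ℂ M) (hχ : χ ≠ 1)
    (c a : ℕ) (hac : a < c) (F : ℕ → ℕ) (hFc : ∀ r, F r < c)
    (hF : ∀ k, ∀ t < c, ((M * t + k) % c = a ↔ t = F (M * k % 6))) :
    (c : ℂ) * ∑ j ∈ range M, (j : ℂ) * χ ((c * j + a : ℕ) : ZMod M) =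
      ∑ k ∈ range M, (k : ℂ) * χ (k : ZMod M) + M * ∑ r ∈ range 6, (F r : ℂ) * D M χ r := by
  have e1 := sum_range_mul_aux
    (fun n => if n % c = a then ((n : ℂ) - a) * χ (n : ZMod M) else 0) c M
  have e2 := sum_range_mul_aux
    (fun n => if n % c = a then ((n : ℂ) - a) * χ (n : ZMod M) else 0) M c
  rw [mul_comm M c, e1] at e2
  have l : ∀ j ∈ range M, (∑ i ∈ range c, if (c * j + i) % c = a then
      (((c * j + i : ℕ) : ℂ) - a) * χ ((c * j + i : ℕ) : ZMod M) else 0)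
      = c * (j * χ ((c * j + a : ℕ) : ZMod M)) := by
    intro j _
    rw [Finset.sum_eq_single a]
    · rw [if_pos (by rw [Nat.mul_add_mod]; exact Nat.mod_eq_of_lt hac)]
      push_cast; ring
    · intro b hb hba
      rw [if_neg]
      rw [Nat.mul_add_mod, Nat.mod_eq_of_lt (by simpa using hb)]
      exact hba
    · intro h; exact absurd (by simpa using hac) h
  rw [Finset.sum_congr rfl l, ← Finset.mul_sum] at e2
  rw [e2, Finset.sum_comm]
  have l2 : ∀ k ∈ range M, (∑ t ∈ range c, if (M * t + k) % c = a then
      (((M * t + k : ℕ) : ℂ) - a) * χ ((M * t + k : ℕ) : ZMod M) else 0)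
      = k * χ (k : ZMod M) + M * ((F (M * k % 6) : ℂ) * χ (k : ZMod M))
        - a * χ (k : ZMod M) := by
    intro k _
    rw [Finset.sum_eq_single (F (M * k % 6))]
    · rw [if_pos ((hF k _ (hFc _)).2 rfl)]
      push_cast
      simp only [CharP.cast_eq_zero, zero_mul, zero_add]
      ring
    · intro b hb hba
      rw [if_neg]
      rw [hF k b (by simpa using hb)]
      exact hba
    · intro h; exact absurd (by simpa using hFc _) h
  rw [Finset.sum_congr rfl l2, Finset.sum_sub_distrib, Finset.sum_add_distrib,
    ← Finset.mul_sum, ← Finset.mul_sum, sum_chi M hM χ hχ,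
    sum_D M χ (fun r => (F r : ℂ))]
  ring

lemma hF_aux (M e c a : ℕ) (he : M % 6 = e) (h15 : e = 1 ∨ e = 5)
    (hca : (c = 2 ∧ a = 0) ∨ (c = 3 ∧ a = 0) ∨ (c = 6 ∧ a = 0) ∨ (c = 3 ∧ a = 1) ∨ (c = 6 ∧ a = 1)) :
    ∀ k, ∀ t < c, ((M * t + k) % c = a ↔ t = (e * a + (c - 1) * (M * k % 6)) % c) := by
  intro k t ht
  rw [Nat.mul_mod M k 6, he]
  obtain ⟨q, hq⟩ : ∃ q, M = 6 * q + e := ⟨M / 6, by omega⟩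
  have hk : k % 6 < 6 := Nat.mod_lt _ (by norm_num)
  rcases h15 with rfl | rfl <;>
  rcases hca with ⟨rfl, rfl⟩ | ⟨rfl, rfl⟩ | ⟨rfl, rfl⟩ | ⟨rfl, rfl⟩ | ⟨rfl, rfl⟩ <;>
  interval_cases t <;> omega

lemma D_symm (M e : ℕ) (hM : 1 < M) (he : M % 6 = e) (h15 : e = 1 ∨ e = 5)
    (χ : DirichletCharacter ℂ M) (r r' : ℕ) (hr : (r = 0 ∧ r' = 1) ∨ (r = 2 ∧ r' = 5) ∨ (r = 3 ∧ r' = 4)) :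
    D M χ r' = χ (-1) * D M χ r := by
  have h0 : χ ((0 : ℕ) : ZMod M) = 0 := by
    have : Fact (1 < M) := ⟨hM⟩
    rw [Nat.cast_zero]; exact MulChar.map_zero χ
  have hMM : χ ((M : ℕ) : ZMod M) = 0 := by
    rw [← h0]; simp
  have ext : ∀ s, D M χ s = ∑ k ∈ range (M + 1), if M * k % 6 = s then χ (k : ZMod M) else 0 := by
    intro s
    rw [Finset.sum_range_succ, hMM]; simp [D]
  rw [ext, ext, ← Finset.sum_range_reflect, Finset.mul_sum]
  refine Finset.sum_congr rfl fun k hk => ?_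
  have hk' : k ≤ M := by have := Finset.mem_range.1 hk; omega
  have e1 : M + 1 - 1 - k = M - k := by omega
  rw [e1]
  have e2 : χ ((M - k : ℕ) : ZMod M) = χ (-1) * χ (k : ZMod M) := by
    rw [← map_mul, Nat.cast_sub hk']; simp
  have e3 : (M * (M - k) % 6 = r' ↔ M * k % 6 = r) := by
    obtain ⟨l, rfl⟩ : ∃ l, M = k + l := ⟨M - k, by omega⟩
    rw [Nat.add_sub_cancel_left, Nat.mul_mod, Nat.mul_mod _ k, he]
    have hk : k % 6 < 6 := Nat.mod_lt _ (by norm_num)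
    rcases h15 with rfl | rfl <;> rcases hr with ⟨rfl, rfl⟩ | ⟨rfl, rfl⟩ | ⟨rfl, rfl⟩ <;> omega
  rw [e2]
  simp only [e3]
  split_ifs <;> simp

lemma zpow_mod3 (ε : ℂ) (h3 : ε ^ 3 = 1) (a b d : ℤ) (h : a = b + 3 * d) : ε ^ a = ε ^ b := by
  have hne : ε ≠ 0 := by rintro rfl; norm_num at h3
  rw [h, zpow_add₀ hne, zpow_mul]
  have : ε ^ (3 : ℤ) = 1 := by exact_mod_cast h3
  rw [this]; simp

lemma pow_mod3 (ε : ℂ) (h3 : ε ^ 3 = 1) (a : ℕ) : ε ^ a = ε ^ (a % 6) := by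
  conv_lhs => rw [← Nat.mod_add_div a 6, pow_add, pow_mul]
  have : ε ^ 6 = 1 := by
    calc ε ^ 6 = (ε ^ 3) ^ 2 := by ring
      _ = 1 := by rw [h3]; simp
  simp [this]

lemma A2_eq (N M e : ℕ) (hNM : M + 1 = 2 * N) (hM : 1 < M) (he : M % 6 = e) (h15 : e = 1 ∨ e = 5)
    (χ : DirichletCharacter ℂ M) (ε : ℂ) (h3 : ε ^ 3 = 1) :
    χ 2 * (∑ k ∈ Finset.Icc (1 - (N : ℤ)) ((N : ℤ) - 1),
        ε ^ (2 * (M : ℤ) * k + 2) * χ ((k : ℤ) : ZMod M)) =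
    ∑ r ∈ range 6, (if r % 2 = 0 then ε ^ (r + 2) else ε ^ (r + 1)) * D M χ r := by
  rw [← sum_D M χ (fun r => if r % 2 = 0 then ε ^ (r + 2) else ε ^ (r + 1)), Finset.mul_sum]
  symm
  refine Finset.sum_bij' (fun l _ => if l % 2 = 0 then (l : ℤ) / 2 else ((l : ℤ) - M) / 2)
    (fun k _ => if 0 ≤ k then (2 * k).toNat else (2 * k + M).toNat) ?_ ?_ ?_ ?_ ?_
  · intro l hl
    have := Finset.mem_range.1 hl
    simp only [Finset.mem_Icc]
    split_ifs <;> omega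
  · intro k hk
    have := Finset.mem_Icc.1 hk
    simp only [Finset.mem_range]
    split_ifs <;> omega
  · intro l hl
    have := Finset.mem_range.1 hl
    split_ifs <;> omega
  · intro k hk
    have := Finset.mem_Icc.1 hk
    split_ifs <;> omega
  · intro l hl
    have hpar : M * l % 6 % 2 = l % 2 := by
      rw [Nat.mul_mod, he]
      have hk : l % 6 < 6 := Nat.mod_lt _ (by norm_num)
      rcases h15 with rfl | rfl <;> omega
    have hdiv := Nat.mod_add_div (M * l) 6
    rw [hpar]
    split_ifs with h
    · obtain ⟨u, rfl⟩ : ∃ u, l = 2 * u := ⟨l / 2, by omega⟩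
      have e1 : (((2 * u : ℕ) : ℤ) / 2) = u := by omega
      rw [e1]
      have e2 : ε ^ (2 * (M : ℤ) * u + 2) = ε ^ (M * (2 * u) % 6 + 2) := by
        rw [← zpow_natCast]
        refine zpow_mod3 ε h3 _ _ (2 * (M * (2 * u) / 6 : ℕ)) ?_
        have : ((M * (2 * u) % 6 + 6 * (M * (2 * u) / 6) : ℕ) : ℤ) = (M * (2 * u) : ℕ) := by
          exact_mod_cast hdiv
        push_cast at this ⊢
        linarith
      rw [e2]
      push_cast
      rw [map_mul]; ring
    · obtain ⟨u, hu⟩ : ∃ u : ℤ, (l : ℤ) - M = 2 * u := ⟨((l : ℤ) - M) / 2, by omega⟩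
      have e1 : ((l : ℤ) - M) / 2 = u := by omega
      rw [e1]
      obtain ⟨w, hw⟩ : ∃ w : ℤ, (M : ℤ) * M = 1 + 3 * w := by
        have hq : (M : ℤ) = 6 * (M / 6 : ℕ) + e := by omega
        generalize ((M / 6 : ℕ) : ℤ) = q at hq
        rcases h15 with rfl | rfl
        · exact ⟨12 * q ^ 2 + 4 * q, by rw [hq]; push_cast; ring⟩
        · exact ⟨12 * q ^ 2 + 20 * q + 8, by rw [hq]; push_cast; ring⟩
      have e2 : ε ^ (2 * (M : ℤ) * u + 2) = ε ^ (M * l % 6 + 1) := by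
        rw [← zpow_natCast]
        refine zpow_mod3 ε h3 _ _ (2 * (M * l / 6 : ℕ) - w) ?_
        have : ((M * l % 6 + 6 * (M * l / 6) : ℕ) : ℤ) = (M * l : ℕ) := by
          exact_mod_cast hdiv
        have h2 : 2 * (M : ℤ) * u = M * l - M * M := by
          rw [mul_comm 2 (M : ℤ), mul_assoc, ← hu]; ring
        rw [h2, hw]
        push_cast at this ⊢
        linarith
      rw [e2]
      have e3 : ((l : ℕ) : ZMod M) = 2 * ((u : ℤ) : ZMod M) := by
        have := congrArg (fun z : ℤ => (z : ZMod M)) hu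
        push_cast at this
        simpa using this
      rw [e3, map_mul]; ring

theorem algebra_odd (P B1 b1 b' x y D0 D2 D3 ε : ℂ) (hP : P ≠ 0)
    (h2 : 2 * (x * B1) = B1 + P * (D3 - D0 - D2))
    (h3 : 3 * (y * B1) = B1 + P * (-2 * (D0 + D3)))
    (h6 : 6 * (x * y * B1) = B1 + P * (-5 * D0 + 3 * D2 + D3))
    (hb : 6 * b1 = B1 + P * (D0 + 3 * D2 + D3))
    (hb' : 3 * b' = B1 + P * (D0 + D3)) :
    b1 * ((1 - ε) * (D0 + D3)) = -(b' * ((ε - 1) * (D2 + D3))) := by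
  obtain ⟨b, rfl⟩ : ∃ b, B1 = P * b := ⟨B1 / P, by field_simp⟩
  have k2 : 2 * (x * b) = b + (D3 - D0 - D2) := mul_left_cancel₀ hP (by linear_combination h2)
  have k3 : 3 * (y * b) = b + (-2 * (D0 + D3)) := mul_left_cancel₀ hP (by linear_combination h3)
  have k6 : 6 * (x * y * b) = b + (-5 * D0 + 3 * D2 + D3) :=
    mul_left_cancel₀ hP (by linear_combination h6)
  have d0 : D0 = (1 - y - x * y - x) * b / 2 := by
    linear_combination (1/4 : ℂ) * k2 + (1/6 : ℂ) * k3 + (1/12 : ℂ) * k6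
  have d3 : D3 = (x + x * y - 2 * y) * b / 2 := by
    linear_combination (1/2 : ℂ) * k3 - d0
  have d2 : D2 = (2 * x * y - 2 * x - y + 1) * b / 2 := by
    linear_combination k2 - d0 + d3
  have hb1 : b1 = P * (b + D0 + 3 * D2 + D3) / 6 := by linear_combination hb / 6
  have hbb : b' = P * (b + D0 + D3) / 3 := by linear_combination hb' / 3
  rw [hb1, hbb, d0, d2, d3]
  ring

end CharSum

open CharSum

theorem character_sum_identity
    (N : ℕ) (hN : 1 < N) (h3 : ¬ (3 ∣ (2 * N - 1)))
    (χ : DirichletCharacter ℂ (2 * N - 1)) (hχ : χ ≠ 1)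
    (ε : ℂ) (hε : ε = Complex.exp (2 * Real.pi * Complex.I / 3)) :
    (∑ j ∈ Finset.range (2 * N - 1), (j : ℂ) * χ ((6 * j + 1 : ℕ) : ZMod (2 * N - 1))) *
      (∑ k ∈ Finset.Icc 1 (2 * N - 2), ε ^ ((2 * N - 1) * k) * χ ((k : ℕ) : ZMod (2 * N - 1))) =
    -(∑ j ∈ Finset.range (2 * N - 1), (j : ℂ) * χ ((6 * j + 2 : ℕ) : ZMod (2 * N - 1))) *
      (∑ k ∈ Finset.Icc (1 - (N : ℤ)) ((N : ℤ) - 1),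
        ε ^ (2 * (2 * (N : ℤ) - 1) * k + 2) * χ ((k : ℤ) : ZMod (2 * N - 1))) := by
  have hprim : IsPrimitiveRoot ε 3 := by
    rw [hε]; exact_mod_cast Complex.isPrimitiveRoot_exp 3 (by norm_num)
  have hε3 : ε ^ 3 = 1 := hprim.pow_eq_one
  have hεs : 1 + ε + ε ^ 2 = 0 := by
    have := hprim.geom_sum_eq_zero (by norm_num)
    simpa [Finset.sum_range_succ] using this
  have hc : (2 * (N : ℤ) - 1) = ((2 * N - 1 : ℕ) : ℤ) := by omega
  rw [hc]
  have hI : Finset.Icc 1 (2 * N - 2) = Finset.Icc 1 ((2 * N - 1) - 1) := by congr 1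
  rw [hI]
  have hNM : (2 * N - 1) + 1 = 2 * N := by omega
  have hM : 1 < 2 * N - 1 := by omega
  have h15' : (2 * N - 1) % 6 = 1 ∨ (2 * N - 1) % 6 = 5 := by omega
  clear hc hI
  generalize 2 * N - 1 = M at *
  obtain ⟨e, he⟩ : ∃ e, M % 6 = e := ⟨_, rfl⟩
  have h15 : e = 1 ∨ e = 5 := by rw [← he]; exact h15'
  have hχ0 : χ 0 = 0 := by
    have : Fact (1 < M) := ⟨hM⟩
    exact MulChar.map_zero χ
  -- the first character sum
  have hA1 : ∑ k ∈ Finset.Icc 1 (M - 1), ε ^ (M * k) * χ ((k : ℕ) : ZMod M)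
      = ∑ r ∈ range 6, ε ^ r * D M χ r := by
    rw [← sum_D M χ (fun r => ε ^ r)]
    have : range M = insert 0 (Finset.Icc 1 (M - 1)) := by
      ext k; simp; omega
    rw [this, Finset.sum_insert (by simp)]
    simp only [Nat.cast_zero, hχ0, mul_zero, zero_add]
    exact Finset.sum_congr rfl fun k _ => by rw [pow_mod3 ε hε3 (M * k)]
  have hA2 := A2_eq N M e hNM hM he h15 χ ε hε3
  have hB2 : ∑ j ∈ Finset.range M, (j : ℂ) * χ ((6 * j + 2 : ℕ) : ZMod M)
      = χ 2 * ∑ j ∈ Finset.range M, (j : ℂ) * χ ((3 * j + 1 : ℕ) : ZMod M) := by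
    rw [Finset.mul_sum]
    refine Finset.sum_congr rfl fun j _ => ?_
    have : ((6 * j + 2 : ℕ) : ZMod M) = 2 * ((3 * j + 1 : ℕ) : ZMod M) := by push_cast; ring
    rw [this, map_mul]; ring
  have K : ∀ c a : ℕ, ((c = 2 ∧ a = 0) ∨ (c = 3 ∧ a = 0) ∨ (c = 6 ∧ a = 0) ∨ (c = 3 ∧ a = 1) ∨
      (c = 6 ∧ a = 1)) → _ := fun c a h =>
    key M hM χ hχ c a (by omega) (fun r => (e * a + (c - 1) * r) % c)
      (fun r => Nat.mod_lt _ (by omega)) (hF_aux M e c a he h15 h)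
  have Z : ∀ c : ℕ, ∑ j ∈ Finset.range M, (j : ℂ) * χ ((c * j + 0 : ℕ) : ZMod M)
      = χ (c : ZMod M) * ∑ j ∈ Finset.range M, (j : ℂ) * χ (j : ZMod M) := by
    intro c
    rw [Finset.mul_sum]
    refine Finset.sum_congr rfl fun j _ => ?_
    rw [add_zero, Nat.cast_mul, map_mul]; ring
  have k2 := K 2 0 (by simp)
  have k3 := K 3 0 (by simp)
  have k6 := K 6 0 (by simp)
  have k31 := K 3 1 (by simp)
  have k61 := K 6 1 (by simp)
  rw [Z] at k2 k3 k6
  have hx6 : χ ((6 : ℕ) : ZMod M) = χ 2 * χ 3 := by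
    rw [← map_mul]; congr 1; push_cast; norm_num
  rw [hx6] at k6
  have s1 := D_symm M e hM he h15 χ 0 1 (by simp)
  have s2 := D_symm M e hM he h15 χ 2 5 (by simp)
  have s3 := D_symm M e hM he h15 χ 3 4 (by simp)
  have hsum : ∑ r ∈ range 6, (1 : ℂ) * D M χ r = 0 := by
    rw [← sum_D M χ (fun _ => 1)]; simpa using sum_chi M hM χ hχ
  have hP : (M : ℂ) ≠ 0 := by exact_mod_cast (by omega : M ≠ 0)
  have hs : χ (-1) = 1 ∨ χ (-1) = -1 := by
    have : χ (-1) * χ (-1) = 1 := by rw [← map_mul]; simp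
    exact mul_self_eq_one_iff.1 this
  rw [hA1, hB2]
  suffices H : (∑ j ∈ Finset.range M, (j : ℂ) * χ ((6 * j + 1 : ℕ) : ZMod M)) *
      (∑ r ∈ range 6, ε ^ r * D M χ r) =
      -((∑ j ∈ Finset.range M, (j : ℂ) * χ ((3 * j + 1 : ℕ) : ZMod M)) *
      ∑ r ∈ range 6, (if r % 2 = 0 then ε ^ (r + 2) else ε ^ (r + 1)) * D M χ r) by
    rw [H, ← hA2]; ring
  clear hA1 hA2 hB2 K Z
  generalize (∑ j ∈ Finset.range M, (j : ℂ) * χ ((6 * j + 1 : ℕ) : ZMod M)) = b1 at *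
  generalize (∑ j ∈ Finset.range M, (j : ℂ) * χ ((3 * j + 1 : ℕ) : ZMod M)) = b' at *
  have hB1 : χ (-1) = 1 → ∑ j ∈ Finset.range M, (j : ℂ) * χ (j : ZMod M) = 0 := by
    intro h1
    have hr : ∑ j ∈ Finset.range (M + 1), (j : ℂ) * χ (j : ZMod M) =
        ∑ j ∈ Finset.range M, (j : ℂ) * χ (j : ZMod M) := by
      rw [Finset.sum_range_succ]; simp [hχ0]
    have hr0 : ∑ j ∈ Finset.range (M + 1), χ (j : ZMod M) = 0 := by
      rw [Finset.sum_range_succ, sum_chi M hM χ hχ]; simp [hχ0]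
    have hrefl : ∑ j ∈ Finset.range (M + 1), (j : ℂ) * χ (j : ZMod M) =
        ∑ j ∈ Finset.range (M + 1), ((M : ℂ) * χ (j : ZMod M) - (j : ℂ) * χ (j : ZMod M)) := by
      rw [← Finset.sum_range_reflect]
      refine Finset.sum_congr rfl fun k hk => ?_
      have hk' : k ≤ M := by have := Finset.mem_range.1 hk; omega
      have e1 : M + 1 - 1 - k = M - k := by omega
      have e2 : χ ((M - k : ℕ) : ZMod M) = χ (k : ZMod M) := by
        rw [← one_mul (χ (k : ZMod M)), ← h1, ← map_mul, Nat.cast_sub hk']; simp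
      rw [e1, e2, Nat.cast_sub hk']; ring
    rw [Finset.sum_sub_distrib, ← Finset.mul_sum, hr0, hr] at hrefl
    have : (2 : ℂ) * ∑ j ∈ Finset.range M, (j : ℂ) * χ (j : ZMod M) = 0 := by
      linear_combination hrefl
    simpa using this
  generalize (∑ j ∈ Finset.range M, (j : ℂ) * χ (j : ZMod M)) = B1 at *
  have hε4 : ε ^ 4 = ε := by linear_combination ε * hε3
  have hε5 : ε ^ 5 = ε ^ 2 := by linear_combination ε ^ 2 * hε3
  have hε6 : ε ^ 6 = 1 := by linear_combination (ε ^ 3 + 1) * hε3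
  have hε2 : ε ^ 2 = -1 - ε := by linear_combination hεs
  simp only [Finset.sum_range_succ, Finset.sum_range_zero, s1, s2, s3] at k2 k3 k6 k31 k61 hsum ⊢
  clear s1 s2 s3
  generalize D M χ 0 = D0 at *
  generalize D M χ 2 = D2 at *
  generalize D M χ 3 = D3 at *
  norm_num at k2 k3 k6 k31 k61 hsum ⊢
  simp only [hε4, hε5, hε6, hε3]
  rcases hs with hs | hs
  · have hB := hB1 hs
    subst hB
    rw [hs] at k2 k3 k6 k31 k61 hsum ⊢
    have hd3 : D3 = -D0 - D2 := by linear_combination hsum / 2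
    subst hd3
    rcases h15 with rfl | rfl
    · norm_num at k31 k61
      have c1 : b1 = -(M : ℂ) * D0 := by linear_combination k61 / 6
      have c2 : b' = (M : ℂ) * D2 := by linear_combination k31 / 3
      rw [c1, c2, hε2]; ring
    · norm_num at k31 k61
      have c1 : b1 = (M : ℂ) * D0 := by linear_combination k61 / 6
      have c2 : b' = -(M : ℂ) * D2 := by linear_combination k31 / 3
      rw [c1, c2, hε2]; ring
  · rw [hs] at k2 k3 k6 k31 k61 hsum ⊢
    have := algebra_odd M B1 b1 b' (χ 2) (χ 3) D0 D2 D3 ε hP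
      (by linear_combination k2) (by linear_combination k3) (by linear_combination k6)
      (by rcases h15 with rfl | rfl <;> norm_num at k61 <;> linear_combination k61)
      (by rcases h15 with rfl | rfl <;> norm_num at k31 <;> linear_combination k31)
    linear_combination this
end
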